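/- Let δt > 0 and ξ ∈ ℝ, and let u⁻, v, u, ũ, λ, f : S → ℝ satisfy, for every z ∈ S: (3u(z) − 4v(z) + u⁻(z))/(2δt) + f(z) = λ(z) + ξ, with λ(z) ≥ 0, u(z) ≥ 0 and λ(z)·u(z) = 0 for all z. If [f, 1] = 0 and [u, 1] = [v, 1] = [u⁻, 1], then [λ, 1] + ξ·[1,1] = 0, hence ξ ≤ 0, and consequently [u, λ + ξ] = ξ·[u, 1] ≤ 0, i.e. −2δt·[u, λ + ξ] ≥ 0. -/

import Mathlib

open Finset

/-! Pairing the scheme with `1` annihilates the time difference, whose coefficients `3, -4, 1` sum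
to zero while all time levels carry the same mass, and what remains is `[λ,1] + ξ[1,1] = 0`.
Pairing `λ + ξ` with `u` instead removes `λ` by complementarity. -/

section BDF2

variable {K E F : Type*} [Field K] [AddCommGroup E] [Module K E] [AddCommGroup F] [Module K F]

/-- The second-order backward difference quotient with step `τ`, taken at the newest of the three
time levels `um`, `v`, `u` (oldest first). -/
def bdf2 (τ : K) (um v u : E) : E :=
  (2 * τ)⁻¹ • ((3 : K) • u - (4 : K) • v + um)

theorem bdf2_apply {S : Type*} (τ : K) (um v u : S → K) (z : S) :
    bdf2 τ um v u z = (3 * u z - 4 * v z + um z) / (2 * τ) := by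
  simp [bdf2, div_eq_inv_mul]

theorem map_bdf2 (φ : E →ₗ[K] F) (τ : K) (um v u : E) :
    φ (bdf2 τ um v u) = bdf2 τ (φ um) (φ v) (φ u) := by
  simp only [bdf2, map_smul, map_add, map_sub]

theorem bdf2_self (τ : K) (x : E) : bdf2 τ x x x = 0 := by
  unfold bdf2
  module

theorem map_add_mul_map_eq_zero_of_bdf2 (φ : E →ₗ[K] K) {τ ξ : K} {um v u lam f e : E}
    (hstep : bdf2 τ um v u + f = lam + ξ • e) (hf : φ f = 0)
    (huv : φ u = φ v) (hvum : φ v = φ um) :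
    φ lam + ξ * φ e = 0 :=
  calc
    φ lam + ξ * φ e = φ (lam + ξ • e) := by rw [map_add, map_smul, smul_eq_mul]
    _ = bdf2 τ (φ um) (φ v) (φ u) + φ f := by rw [← hstep, map_add, map_bdf2]
    _ = 0 := by rw [huv, hvum, bdf2_self, hf, add_zero]

end BDF2

theorem bilinForm_add_smul_right_of_eq_zero
    {R M : Type*} [CommSemiring R] [AddCommMonoid M] [Module R M]
    (B : LinearMap.BilinForm R M) {x y : M} (hxy : B x y = 0) (c : R) (e : M) :
    B x (y + c • e) = c * B x e := by
  rw [map_add, map_smul, hxy, zero_add, smul_eq_mul]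

section DiscreteInner

variable {S R : Type*} [Fintype S] [CommSemiring R]

/-- The discrete inner product `[u, v]` with quadrature weights `w`, as a bilinear form on grid
functions; the weights are arbitrary, so it need not be positive definite. -/
def discreteInner (w : S → R) : LinearMap.BilinForm R (S → R) :=
  LinearMap.mk₂ R (fun u v => ∑ z, w z * u z * v z)
    (fun u u' v => by simp only [Pi.add_apply, mul_add, add_mul, sum_add_distrib])
    (fun c u v => by
      simp only [Pi.smul_apply, smul_eq_mul, mul_sum, mul_assoc, mul_left_comm c])
    (fun u v v' => by simp only [Pi.add_apply, mul_add, sum_add_distrib])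
    (fun c u v => by
      simp only [Pi.smul_apply, smul_eq_mul, mul_sum, mul_left_comm c])

theorem discreteInner_apply (w u v : S → R) :
    discreteInner w u v = ∑ z, w z * u z * v z :=
  rfl

theorem discreteInner_eq_zero_of_mul_eq_zero (w : S → R) {u v : S → R}
    (huv : ∀ z, u z * v z = 0) : discreteInner w u v = 0 :=
  sum_eq_zero fun z _ => by rw [mul_assoc, huv, mul_zero]

theorem discreteInner_nonneg [PartialOrder R] [IsOrderedRing R] {w u v : S → R}
    (hw : 0 ≤ w) (hu : 0 ≤ u) (hv : 0 ≤ v) : 0 ≤ discreteInner w u v :=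
  sum_nonneg fun z _ => mul_nonneg (mul_nonneg (hw z) (hu z)) (hv z)

theorem discreteInner_one_one_pos [PartialOrder R] [IsOrderedCancelAddMonoid R] [Nonempty S]
    {w : S → R} (hw : ∀ z, 0 < w z) : 0 < discreteInner w 1 1 :=
  sum_pos (fun z _ => by simpa using hw z) univ_nonempty

end DiscreteInner

theorem second_order_scalar_multiplier_sign_general
    {K E : Type*} [Field K] [LinearOrder K] [IsStrictOrderedRing K] [AddCommGroup E] [Module K E]
    (B : LinearMap.BilinForm K E) {e : E} (he : 0 < B e e)
    {τ : K} (hτ : 0 < τ) {ξ : K} {um v u lam f : E}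
    (hstep : bdf2 τ um v u + f = lam + ξ • e)
    (hlam : 0 ≤ B lam e) (hu : 0 ≤ B u e) (hcomp : B u lam = 0)
    (hf : B f e = 0) (huv : B u e = B v e) (hvum : B v e = B um e) :
    B lam e + ξ * B e e = 0 ∧
    ξ ≤ 0 ∧
    B u (lam + ξ • e) = ξ * B u e ∧
    B u (lam + ξ • e) ≤ 0 ∧
    0 ≤ -2 * τ * B u (lam + ξ • e) := by
  have balance : B lam e + ξ * B e e = 0 :=
    map_add_mul_map_eq_zero_of_bdf2 (B.flip e) hstep hf huv hvum
  have ξ_nonpos : ξ ≤ 0 := nonpos_of_mul_nonpos_left (by linarith) he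
  have pairing : B u (lam + ξ • e) = ξ * B u e :=
    bilinForm_add_smul_right_of_eq_zero B hcomp ξ e
  have pairing_nonpos : B u (lam + ξ • e) ≤ 0 :=
    pairing.trans_le (mul_nonpos_of_nonpos_of_nonneg ξ_nonpos hu)
  exact ⟨balance, ξ_nonpos, pairing, pairing_nonpos,
    mul_nonneg_of_nonpos_of_nonpos (by linarith) pairing_nonpos⟩

/-- Sign estimate (equations (3.32)–(3.33)) in the proof of Theorem 3.4: with
`um = u⁻, v, u` the solutions at levels `n−1, n, n+1` of the mass-conserving
second-order scheme, `lam` the pointwise multiplier, `ξ` the scalar mass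
multiplier and `f` standing for `L_h^n ũ^{n+1}` with `[f,1] = 0`, if
`(3u − 4v + u⁻)/(2δt) + f = λ + ξ` pointwise, the KKT conditions hold and
`[u,1] = [v,1] = [u⁻,1]`, then `[λ,1] + ξ·[1,1] = 0`, hence `ξ ≤ 0`, and
consequently `[u, λ + ξ] = ξ·[u,1] ≤ 0`, i.e. `−2δt·[u, λ + ξ] ≥ 0`. -/
theorem second_order_scalar_multiplier_sign
    {S : Type*} [Fintype S] [Nonempty S] (w : S → ℝ) (hw : ∀ z, 0 < w z)
    (δt : ℝ) (hδt : 0 < δt) (ξ : ℝ)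
    (um v u ut lam f : S → ℝ)
    (hstep : ∀ z, (3 * u z - 4 * v z + um z) / (2 * δt) + f z = lam z + ξ)
    (hlam : ∀ z, 0 ≤ lam z) (hu : ∀ z, 0 ≤ u z)
    (hcomp : ∀ z, lam z * u z = 0)
    (hf1 : (∑ z, w z * f z * 1) = 0)
    (hmass1 : (∑ z, w z * u z * 1) = ∑ z, w z * v z * 1)
    (hmass2 : (∑ z, w z * v z * 1) = ∑ z, w z * um z * 1) :
    (∑ z, w z * lam z * 1) + ξ * (∑ z, w z * (1 : ℝ) * 1) = 0 ∧
    ξ ≤ 0 ∧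
    (∑ z, w z * u z * (lam z + ξ)) = ξ * (∑ z, w z * u z * 1) ∧
    (∑ z, w z * u z * (lam z + ξ)) ≤ 0 ∧
    0 ≤ -2 * δt * (∑ z, w z * u z * (lam z + ξ)) := by
  simpa [discreteInner_apply] using second_order_scalar_multiplier_sign_general (discreteInner w)
    (discreteInner_one_one_pos hw) hδt (funext fun z => by simpa [bdf2_apply] using hstep z)
    (discreteInner_nonneg (fun z => (hw z).le) hlam zero_le_one)
    (discreteInner_nonneg (fun z => (hw z).le) hu zero_le_one)
    (discreteInner_eq_zero_of_mul_eq_zero w fun z => (mul_comm _ _).trans (hcomp z))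
    hf1 hmass1 hmass2
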